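/- arXiv:2312.14905 — 3 statements merged into one kernel-verified Lean document; each statement's English description precedes it below -/
import Mathlib

section
/- Hexagon relations for linking (from relations (3.6)): Let (C,x) be a quiver pair with m nodes and let i, j, k be pairwise distinct nodes. (a) Let A be the result of applying to (C,x) the linkings L(i,j), then L(j,k), then L(m+1,k), and B the result of applying L(j,k), then L(i,j), then L(i,m+1); then A and B coincide after relabeling by the transposition of {1,…,m+3} exchanging m+1 and m+2. (b) Let A′ be the result of applying L(i,j), then L(m+1,k), then L(j,k), and B′ the result of applying L(j,k), then L(i,m+1), then L(i,j); then A′ and B′ coincide after relabeling by the transposition of {1,…,m+3} exchanging m+1 and m+3. (In each case the node created at step t has index m+t.) -/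
/-!
Evaluating a linking separately on old nodes and on the created node turns both relations into
finite checks. In each relation the three created nodes carry the products `x i * x j`,
`x j * x k` and `x i * x j * x k` on either side, and the relabeling matches the nodes carrying
equal products. Every entry of either matrix is then a sum of entries of `C` plus a correction
of at most one, and the two sides agree by the symmetry of `C` once it is known which of
`i, j, k`, if any, each old node equals.
-/

namespace QuiverUnlink

/-- Linking of the distinct nodes `i` and `j`: the matrix part. -/
def linkC {m : ℕ} (C : Fin m → Fin m → ℤ) (i j : Fin m) :
    Fin (m + 1) → Fin (m + 1) → ℤ := fun a b =>
  if ha : (a : ℕ) < m then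
    if hb : (b : ℕ) < m then
      if ((⟨a, ha⟩ : Fin m) = i ∧ (⟨b, hb⟩ : Fin m) = j) ∨
         ((⟨a, ha⟩ : Fin m) = j ∧ (⟨b, hb⟩ : Fin m) = i) then
        C i j + 1
      else C ⟨a, ha⟩ ⟨b, hb⟩
    else
      if (⟨a, ha⟩ : Fin m) = i then C i i + C i j
      else if (⟨a, ha⟩ : Fin m) = j then C j j + C i j
      else C ⟨a, ha⟩ i + C ⟨a, ha⟩ j
  else
    if hb : (b : ℕ) < m then
      if (⟨b, hb⟩ : Fin m) = i then C i i + C i j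
      else if (⟨b, hb⟩ : Fin m) = j then C j j + C i j
      else C ⟨b, hb⟩ i + C ⟨b, hb⟩ j
    else C i i + C j j + 2 * C i j

/-- Linking of the distinct nodes `i` and `j`: the generating-parameters part. -/
def linkX {G : Type*} [CommGroup G] {m : ℕ} (x : Fin m → G) (i j : Fin m) :
    Fin (m + 1) → G := fun a =>
  if ha : (a : ℕ) < m then x ⟨a, ha⟩ else x i * x j

lemma linkC_old_old {m : ℕ} (C : Fin m → Fin m → ℤ) (i j a b : Fin m) :
    linkC C i j a.castSucc b.castSucc =
      if (a = i ∧ b = j) ∨ (a = j ∧ b = i) then C i j + 1 else C a b := by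
  simp [linkC]

lemma linkC_old_new {m : ℕ} (C : Fin m → Fin m → ℤ) (i j a : Fin m) :
    linkC C i j a.castSucc (Fin.last m) =
      if a = i then C i i + C i j else if a = j then C j j + C i j else C a i + C a j := by
  simp [linkC]

lemma linkC_new_old {m : ℕ} (C : Fin m → Fin m → ℤ) (i j b : Fin m) :
    linkC C i j (Fin.last m) b.castSucc =
      if b = i then C i i + C i j else if b = j then C j j + C i j else C b i + C b j := by
  simp [linkC]

lemma linkC_new_new {m : ℕ} (C : Fin m → Fin m → ℤ) (i j : Fin m) :
    linkC C i j (Fin.last m) (Fin.last m) = C i i + C j j + 2 * C i j := by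
  simp [linkC]

lemma linkX_old {G : Type*} [CommGroup G] {m : ℕ} (x : Fin m → G) (i j a : Fin m) :
    linkX x i j a.castSucc = x a := by
  simp [linkX]

lemma linkX_new {G : Type*} [CommGroup G] {m : ℕ} (x : Fin m → G) (i j : Fin m) :
    linkX x i j (Fin.last m) = x i * x j := by
  simp [linkX]

/-- Splits the nodes present after three linkings into the original nodes and the three created
ones. -/
lemma node_cases {m : ℕ} {P : Fin (m + 3) → Prop}
    (old : ∀ a : Fin m, P a.castSucc.castSucc.castSucc)
    (new₁ : P (Fin.last m).castSucc.castSucc) (new₂ : P (Fin.last (m + 1)).castSucc)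
    (new₃ : P (Fin.last (m + 2))) (a : Fin (m + 3)) : P a :=
  Fin.lastCases new₃ (Fin.lastCases new₂ (Fin.lastCases new₁ old)) a

/-- **Hexagon relations for linking** (from relations (3.6)).
For pairwise distinct nodes `i, j, k`:
(a) applying `L(i,j)`, `L(j,k)`, `L(m+1,k)` and applying `L(j,k)`, `L(i,j)`, `L(i,m+1)` give
quiver pairs coinciding after relabeling by the transposition of the first two created nodes;
(b) applying `L(i,j)`, `L(m+1,k)`, `L(j,k)` and applying `L(j,k)`, `L(i,m+1)`, `L(i,j)` give
quiver pairs coinciding after relabeling by the transposition of the first and third created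
nodes. (The node created at step `t` has index `m+t-1` in `Fin (m+3)`.) -/
theorem linking_hexagon_relations {G : Type*} [CommGroup G] {m : ℕ}
    (C : Fin m → Fin m → ℤ) (hC : ∀ a b, C a b = C b a) (x : Fin m → G)
    (i j k : Fin m) (hij : i ≠ j) (hjk : j ≠ k) (hik : i ≠ k) :
    let τa : Equiv.Perm (Fin (m + 3)) :=
      Equiv.swap ⟨m, by omega⟩ ⟨m + 1, by omega⟩
    let τb : Equiv.Perm (Fin (m + 3)) :=
      Equiv.swap ⟨m, by omega⟩ ⟨m + 2, by omega⟩
    ((∀ a b,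
        linkC (linkC (linkC C i j) j.castSucc k.castSucc) ⟨m, by omega⟩ (k.castSucc.castSucc)
            a b =
          linkC (linkC (linkC C j k) i.castSucc j.castSucc) (i.castSucc.castSucc) ⟨m, by omega⟩
            (τa a) (τa b)) ∧
     (∀ a,
        linkX (linkX (linkX x i j) j.castSucc k.castSucc) ⟨m, by omega⟩ (k.castSucc.castSucc)
            a =
          linkX (linkX (linkX x j k) i.castSucc j.castSucc) (i.castSucc.castSucc) ⟨m, by omega⟩
            (τa a))) ∧
    ((∀ a b,
        linkC (linkC (linkC C i j) ⟨m, by omega⟩ k.castSucc) (j.castSucc.castSucc)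
            (k.castSucc.castSucc) a b =
          linkC (linkC (linkC C j k) i.castSucc ⟨m, by omega⟩) (i.castSucc.castSucc)
            (j.castSucc.castSucc) (τb a) (τb b)) ∧
     (∀ a,
        linkX (linkX (linkX x i j) ⟨m, by omega⟩ k.castSucc) (j.castSucc.castSucc)
            (k.castSucc.castSucc) a =
          linkX (linkX (linkX x j k) i.castSucc ⟨m, by omega⟩) (i.castSucc.castSucc)
            (j.castSucc.castSucc) (τb a))) := by
  have e₁ : (⟨m, by omega⟩ : Fin (m + 1)) = Fin.last m := rfl
  have e₂ : (⟨m, by omega⟩ : Fin (m + 2)) = (Fin.last m).castSucc := rfl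
  have n₁ : (⟨m, by omega⟩ : Fin (m + 3)) = (Fin.last m).castSucc.castSucc := rfl
  have n₂ : (⟨m + 1, by omega⟩ : Fin (m + 3)) = (Fin.last (m + 1)).castSucc := rfl
  have n₃ : (⟨m + 2, by omega⟩ : Fin (m + 3)) = Fin.last (m + 2) := rfl
  have ne (n : ℕ) (a : Fin n) : a.castSucc ≠ Fin.last n := Fin.castSucc_ne_last a
  have ne' (n : ℕ) (a : Fin n) : Fin.last n ≠ a.castSucc := (Fin.castSucc_ne_last a).symm
  have cij := hC i j
  have cjk := hC j k
  have cik := hC i k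
  intro τa τb
  simp only [e₁, e₂]
  refine ⟨⟨?_, ?_⟩, ?_, ?_⟩
  · refine node_cases (fun a => ?_) ?_ ?_ ?_ <;> refine node_cases (fun b => ?_) ?_ ?_ ?_ <;>
      simp only [τa, n₁, n₂, Equiv.swap_apply_def, Fin.castSucc_inj, ne, ne', if_true, if_false,
        linkC_old_old, linkC_old_new, linkC_new_old, linkC_new_new, and_true, true_and, and_false,
        false_and, or_false, false_or] <;>
      grind
  · refine node_cases (fun a => ?_) ?_ ?_ ?_ <;>
      simp [τa, n₁, n₂, Equiv.swap_apply_def, ne, ne', linkX_old, linkX_new, mul_assoc]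
  · refine node_cases (fun a => ?_) ?_ ?_ ?_ <;> refine node_cases (fun b => ?_) ?_ ?_ ?_ <;>
      simp only [τb, n₁, n₃, Equiv.swap_apply_def, Fin.castSucc_inj, ne, ne', if_true, if_false,
        linkC_old_old, linkC_old_new, linkC_new_old, linkC_new_new, and_true, true_and, and_false,
        false_and, or_false, false_or] <;>
      grind
  · refine node_cases (fun a => ?_) ?_ ?_ ?_ <;>
      simp [τb, n₁, n₃, Equiv.swap_apply_def, ne, ne', linkX_old, linkX_new, mul_assoc]

end QuiverUnlink
end

section
/- Existence of (1,1)-connectors (Lemma 3.1 of Section 3.4): For every m and all pairs (a,b) and (c,d) with a ≠ b and c ≠ d in {1,…,m}, there exist sequences of unlinkings T₁ and T₂ starting at m+1 nodes, of equal length at most 2, such that for every commutative group G with distinguished element q ∈ G, every symmetric m×m integer matrix C, and every x : {1,…,m} → G, the quiver pair obtained by applying U(a,b) and then T₁ to (C,x) is permutation-equivalent rel the first m nodes to the quiver pair obtained by applying U(c,d) and then T₂ to (C,x). -/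
/-!
For symmetric matrices `U(i,j) = U(j,i)`, so three cases remain.

* If `{a,b} = {c,d}`, the two results already agree.
* If the pairs are disjoint, `U(a,b)` and `U(c,d)` commute once the two new nodes are exchanged:
  the entry between the new nodes is `C a c + C a d + C b c + C b d` in either order.
* If the pairs share exactly one node, say `{a,b}` and `{b,c}`, performing both in either order
  gives nodes `p` (from `ab`) and `r` (from `bc`). The results differ in two entries only: with
  `U(a,b)` first, the entry at `(a,r)` is smaller by one; with `U(b,c)` first, the one at `(p,c)` is.
  A further `U(p,c)`, respectively `U(a,r)`, makes them agree, the third new node having parameter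
  `q⁻² x_a x_b x_c` both times.

The verification is carried out on matrices indexed by natural numbers (`natC`, `natX`), where
an iterated unlinking involves no dependent types; `permEquivRel_of_swap` transfers it back.
-/

namespace QuiverUnlink

universe u

/-- Unlinking of the distinct nodes `i` and `j`: the matrix part.
Nodes are indexed `0, …, m-1`; the newly created node has index `m`. -/
def unlinkC {m : ℕ} (C : Fin m → Fin m → ℤ) (i j : Fin m) :
    Fin (m + 1) → Fin (m + 1) → ℤ := fun a b =>
  if ha : (a : ℕ) < m then
    if hb : (b : ℕ) < m then
      if ((⟨a, ha⟩ : Fin m) = i ∧ (⟨b, hb⟩ : Fin m) = j) ∨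
         ((⟨a, ha⟩ : Fin m) = j ∧ (⟨b, hb⟩ : Fin m) = i) then
        C i j - 1
      else C ⟨a, ha⟩ ⟨b, hb⟩
    else
      if (⟨a, ha⟩ : Fin m) = i then C i i + C i j - 1
      else if (⟨a, ha⟩ : Fin m) = j then C j j + C i j - 1
      else C ⟨a, ha⟩ i + C ⟨a, ha⟩ j
  else
    if hb : (b : ℕ) < m then
      if (⟨b, hb⟩ : Fin m) = i then C i i + C i j - 1
      else if (⟨b, hb⟩ : Fin m) = j then C j j + C i j - 1
      else C ⟨b, hb⟩ i + C ⟨b, hb⟩ j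
    else C i i + C j j + 2 * C i j - 1

/-- Unlinking of the distinct nodes `i` and `j`: the generating-parameters part. -/
def unlinkX {G : Type*} [CommGroup G] {m : ℕ} (q : G) (x : Fin m → G) (i j : Fin m) :
    Fin (m + 1) → G := fun a =>
  if ha : (a : ℕ) < m then x ⟨a, ha⟩ else q⁻¹ * x i * x j

/-- A quiver pair: a symmetric integer matrix together with generating parameters in `G`,
on `m` nodes (indexed `0, …, m-1`). -/
structure QP (G : Type u) where
  m : ℕ
  C : Fin m → Fin m → ℤ
  x : Fin m → G

/-- Matrix entry of a quiver pair, read at natural-number indices (junk value `0` out of range). -/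
def QP.Cn {G : Type u} (Q : QP G) (a b : ℕ) : ℤ :=
  if ha : a < Q.m then if hb : b < Q.m then Q.C ⟨a, ha⟩ ⟨b, hb⟩ else 0 else 0

/-- Generating parameter of a quiver pair, read at a natural-number index
(junk value `1` out of range). -/
def QP.xn {G : Type u} [CommGroup G] (Q : QP G) (a : ℕ) : G :=
  if h : a < Q.m then Q.x ⟨a, h⟩ else 1

/-- One unlinking step `U(i,j)`, with nodes given by natural-number indices.
If the indices are not valid the quiver pair is returned unchanged (this case never
occurs under the validity hypotheses of the statements below). -/
def unlinkStep {G : Type u} [CommGroup G] (q : G) (i j : ℕ) (Q : QP G) : QP G :=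
  if h : i < Q.m ∧ j < Q.m ∧ i ≠ j then
    { m := Q.m + 1
      C := unlinkC Q.C ⟨i, h.1⟩ ⟨j, h.2.1⟩
      x := unlinkX q Q.x ⟨i, h.1⟩ ⟨j, h.2.1⟩ }
  else Q

/-- Apply a sequence of unlinkings, leftmost entry first. -/
def applySeq {G : Type u} [CommGroup G] (q : G) (S : List (ℕ × ℕ)) (Q : QP G) : QP G :=
  S.foldl (fun R e => unlinkStep q e.1 e.2 R) Q

/-- A sequence of unlinkings starting at `m` nodes: the entry at (0-based) position `t`
consists of two distinct node indices `< m + t` (the node created at step `t` has index `m + t`). -/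
def ValidSeq (m : ℕ) (S : List (ℕ × ℕ)) : Prop :=
  ∀ t : Fin S.length,
    (S.get t).1 ≠ (S.get t).2 ∧ (S.get t).1 < m + (t : ℕ) ∧ (S.get t).2 < m + (t : ℕ)

/-- Two quiver pairs are permutation-equivalent rel the first `m` nodes. -/
def PermEquivRel {G : Type u} (m : ℕ) (X Y : QP G) : Prop :=
  ∃ (h : X.m = Y.m) (π : Equiv.Perm (Fin Y.m)),
    (∀ a : Fin Y.m, (a : ℕ) < m → π a = a) ∧
    (∀ a b : Fin X.m, X.C a b = Y.C (π (Fin.cast h a)) (π (Fin.cast h b))) ∧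
    (∀ a : Fin X.m, X.x a = Y.x (π (Fin.cast h a)))

/-- Two quiver pairs are permutation-equivalent. -/
def PermEquiv {G : Type u} (X Y : QP G) : Prop :=
  ∃ (h : X.m = Y.m) (π : Equiv.Perm (Fin Y.m)),
    (∀ a b : Fin X.m, X.C a b = Y.C (π (Fin.cast h a)) (π (Fin.cast h b))) ∧
    (∀ a : Fin X.m, X.x a = Y.x (π (Fin.cast h a)))

/-! ### Unlinking on natural-number indices -/

/-- The matrix part of an unlinking on `m` nodes, written for a matrix with natural-number
indices; entries outside the new range `0, …, m` are `0`, in accordance with `QP.Cn`. -/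
def natC (m : ℕ) (C : ℕ → ℕ → ℤ) (i j a b : ℕ) : ℤ :=
  if a < m then
    if b < m then
      if (a = i ∧ b = j) ∨ (a = j ∧ b = i) then C i j - 1 else C a b
    else if b = m then
      if a = i then C i i + C i j - 1
      else if a = j then C j j + C i j - 1
      else C a i + C a j
    else 0
  else if a = m then
    if b < m then
      if b = i then C i i + C i j - 1
      else if b = j then C j j + C i j - 1
      else C b i + C b j
    else if b = m then C i i + C j j + 2 * C i j - 1
    else 0
  else 0

/-- The generating-parameters part of an unlinking on `m` nodes, written for natural-number
indices; the value outside the new range `0, …, m` is `1`, in accordance with `QP.xn`. -/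
def natX {G : Type*} [CommGroup G] (m : ℕ) (q : G) (x : ℕ → G) (i j a : ℕ) : G :=
  if a < m then x a else if a = m then q⁻¹ * x i * x j else 1

section Step

variable {G : Type u} [CommGroup G] (q : G) {i j : ℕ} (Q : QP G)

lemma unlinkStep_m (hi : i < Q.m) (hj : j < Q.m) (hij : i ≠ j) :
    (unlinkStep q i j Q).m = Q.m + 1 := by
  simp [unlinkStep, hi, hj, hij]

lemma unlinkStep_Cn (hi : i < Q.m) (hj : j < Q.m) (hij : i ≠ j) :
    (unlinkStep q i j Q).Cn = natC Q.m Q.Cn i j := by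
  funext a b
  have h : i < Q.m ∧ j < Q.m ∧ i ≠ j := ⟨hi, hj, hij⟩
  rw [unlinkStep, dif_pos h]
  simp only [QP.Cn, unlinkC, natC, Fin.mk.injEq, hi, hj, dif_pos]
  rcases lt_trichotomy a Q.m with ha | ha | ha <;> rcases lt_trichotomy b Q.m with hb | hb | hb <;>
    simp (disch := omega) only [dif_pos, dif_neg, if_pos, if_neg]

lemma unlinkStep_xn (hi : i < Q.m) (hj : j < Q.m) (hij : i ≠ j) :
    (unlinkStep q i j Q).xn = natX Q.m q Q.xn i j := by
  funext a
  have h : i < Q.m ∧ j < Q.m ∧ i ≠ j := ⟨hi, hj, hij⟩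
  rw [unlinkStep, dif_pos h]
  simp only [QP.xn, unlinkX, natX]
  grind

lemma unlinkStep_comm (hs : ∀ a b, Q.C a b = Q.C b a) (i j : ℕ) :
    unlinkStep q i j Q = unlinkStep q j i Q := by
  by_cases h : i < Q.m ∧ j < Q.m ∧ i ≠ j
  · have h' : j < Q.m ∧ i < Q.m ∧ j ≠ i := ⟨h.2.1, h.1, h.2.2.symm⟩
    simp only [unlinkStep, dif_pos h, dif_pos h', QP.mk.injEq, heq_eq_eq, true_and]
    constructor
    · funext a b
      simp only [unlinkC, hs ⟨j, h.2.1⟩ ⟨i, h.1⟩]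
      by_cases ha : (a : ℕ) < Q.m <;> by_cases hb : (b : ℕ) < Q.m <;>
        simp only [ha, hb, dif_pos, dif_neg, not_false_eq_true] <;> grind
    · funext a
      simp only [unlinkX]
      split_ifs
      · rfl
      · exact mul_right_comm _ _ _
  · have h' : ¬ (j < Q.m ∧ i < Q.m ∧ j ≠ i) := fun h' => h ⟨h'.2.1, h'.1, h'.2.2.symm⟩
    simp only [unlinkStep, dif_neg h, dif_neg h']

end Step

/-! ### Permutation equivalence -/

lemma PermEquivRel.refl {G : Type u} (m : ℕ) (X : QP G) : PermEquivRel m X X :=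
  ⟨rfl, 1, by simp, by simp, by simp⟩

/-- A permutation of the node indices supported on `m` and `m + 1` may be checked on
natural-number indices. -/
lemma permEquivRel_of_swap {G : Type u} [CommGroup G] {m : ℕ} {X Y : QP G} (h : X.m = Y.m)
    (hm : m + 1 < Y.m)
    (hC : ∀ a b, a < X.m → b < X.m →
      X.Cn a b = Y.Cn (Equiv.swap m (m + 1) a) (Equiv.swap m (m + 1) b))
    (hx : ∀ a, a < X.m → X.xn a = Y.xn (Equiv.swap m (m + 1) a)) :
    PermEquivRel m X Y := by
  have key : ∀ a : Fin Y.m,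
      ((Equiv.swap (⟨m, by omega⟩ : Fin Y.m) ⟨m + 1, hm⟩ a : Fin Y.m) : ℕ) =
        Equiv.swap m (m + 1) (a : ℕ) := by
    intro a
    simp only [Equiv.swap_apply_def, Fin.ext_iff]
    split_ifs <;> rfl
  refine ⟨h, Equiv.swap ⟨m, by omega⟩ ⟨m + 1, hm⟩, ?_, ?_, ?_⟩
  · intro a ha
    ext
    rw [key, Equiv.swap_apply_of_ne_of_ne] <;> omega
  · intro a b
    have := hC a b a.2 b.2
    have ea := key (Fin.cast h a)
    have eb := key (Fin.cast h b)
    simp only [Fin.val_cast] at ea eb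
    rw [← ea, ← eb] at this
    simpa [QP.Cn] using this
  · intro a
    have := hx a a.2
    have ea := key (Fin.cast h a)
    simp only [Fin.val_cast] at ea
    rw [← ea] at this
    simpa [QP.xn] using this

lemma lt_cases {m i : ℕ} (h : i < m + 3) : i < m ∨ i = m ∨ i = m + 1 ∨ i = m + 2 := by omega

/-! ### Matrix identities -/

section NatC

variable {m i j a b : ℕ} {C : ℕ → ℕ → ℤ}

lemma natC_symm (hs : ∀ i j, C i j = C j i) (m i j a b : ℕ) :
    natC m C i j a b = natC m C i j b a := by
  simp only [natC]
  split_ifs <;> first | rfl | exact hs _ _ | omega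

/-- An unlinking removes one arrow between `i` and `j` and keeps the other old entries. -/
lemma natC_old (hs : ∀ i j, C i j = C j i) (ha : a < m) (hb : b < m) :
    natC m C i j a b = C a b - if (a = i ∧ b = j) ∨ (a = j ∧ b = i) then 1 else 0 := by
  simp only [natC, if_pos ha, if_pos hb]
  split_ifs with h
  · rcases h with ⟨rfl, rfl⟩ | ⟨rfl, rfl⟩
    · rfl
    · rw [hs]
  · simp

/-- Entries of the new node: for symmetric matrices the three cases of the definition share the
formula `C b i + C b j`, diminished by one at `b = i` and `b = j`. -/
lemma natC_new_left (hs : ∀ i j, C i j = C j i) (hb : b < m) :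
    natC m C i j m b = C b i + C b j - if b = i ∨ b = j then 1 else 0 := by
  simp only [natC, if_neg (lt_irrefl m), if_pos hb, if_true]
  split_ifs with h1 h2 h3 h4 h5 <;> first | omega | skip
  · subst h1
    rfl
  · subst h3
    rw [hs i b]
    ring

lemma natC_new_right (hs : ∀ i j, C i j = C j i) (hb : b < m) :
    natC m C i j b m = C b i + C b j - if b = i ∨ b = j then 1 else 0 := by
  rw [natC_symm hs, natC_new_left hs hb]

lemma natC_new_self : natC m C i j m m = C i i + C j j + 2 * C i j - 1 := by
  simp [natC]

end NatC

/-- `U(a,b)` and `U(c,d)` on disjoint pairs commute at the level of matrices. -/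
lemma natC_disjoint {m a b c d : ℕ} {C : ℕ → ℕ → ℤ} (hs : ∀ i j, C i j = C j i)
    (ha : a < m) (hb : b < m) (hc : c < m) (hd : d < m)
    (hac : a ≠ c) (had : a ≠ d) (hbc : b ≠ c) (hbd : b ≠ d)
    {i j : ℕ} (hi : i < m + 2) (hj : j < m + 2) :
    natC (m + 1) (natC m C a b) c d i j =
      natC (m + 1) (natC m C c d) a b (Equiv.swap m (m + 1) i) (Equiv.swap m (m + 1) j) := by
  have hs1 := natC_symm hs m a b
  have hs2 := natC_symm hs m c d
  have hi' : i < m ∨ i = m ∨ i = m + 1 := by omega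
  have hj' : j < m ∨ j = m ∨ j = m + 1 := by omega
  rcases hi' with h | rfl | rfl <;> rcases hj' with h' | rfl | rfl
  all_goals
    simp (disch := omega) only [Equiv.swap_apply_left, Equiv.swap_apply_right,
      Equiv.swap_apply_of_ne_of_ne, natC_new_self, natC_new_left hs, natC_new_left hs1,
      natC_new_left hs2, natC_new_right hs, natC_new_right hs1, natC_new_right hs2,
      natC_old hs, natC_old hs1, natC_old hs2, if_neg]
    grind

/-- The matrices agree after the two longer sequences attached to the pairs `{a,b}` and
`{b,c}` sharing the node `b`. -/
lemma natC_hexagon {m a b c : ℕ} {C : ℕ → ℕ → ℤ} (hs : ∀ i j, C i j = C j i)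
    (ha : a < m) (hb : b < m) (hc : c < m) (hab : a ≠ b) (hbc : b ≠ c) (hac : a ≠ c)
    {i j : ℕ} (hi : i < m + 3) (hj : j < m + 3) :
    natC (m + 2) (natC (m + 1) (natC m C a b) b c) m c i j =
      natC (m + 2) (natC (m + 1) (natC m C b c) a b) a m
        (Equiv.swap m (m + 1) i) (Equiv.swap m (m + 1) j) := by
  have hs1 := natC_symm hs m a b
  have hs2 := natC_symm hs m b c
  have hs3 := natC_symm hs1 (m + 1) b c
  have hs4 := natC_symm hs2 (m + 1) a b
  have hi' := lt_cases hi
  have hj' := lt_cases hj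
  rcases hi' with h | rfl | rfl | rfl <;> rcases hj' with h' | rfl | rfl | rfl
  all_goals
    simp (disch := omega) only [Equiv.swap_apply_left, Equiv.swap_apply_right,
      Equiv.swap_apply_of_ne_of_ne, natC_new_self, natC_new_left hs, natC_new_left hs1,
      natC_new_left hs2, natC_new_left hs3, natC_new_left hs4, natC_new_right hs,
      natC_new_right hs1, natC_new_right hs2, natC_new_right hs3, natC_new_right hs4,
      natC_old hs, natC_old hs1, natC_old hs2, natC_old hs3, natC_old hs4, if_neg]
    grind

/-! ### Identities for the generating parameters -/

lemma natX_disjoint {G : Type*} [CommGroup G] {m a b c d : ℕ} (q : G) (x : ℕ → G)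
    (ha : a < m) (hb : b < m) (hc : c < m) (hd : d < m) {i : ℕ} (hi : i < m + 2) :
    natX (m + 1) q (natX m q x a b) c d i =
      natX (m + 1) q (natX m q x c d) a b (Equiv.swap m (m + 1) i) := by
  rcases lt_cases (show i < m + 3 by omega) with h | rfl | rfl | rfl
  · simp only [Equiv.swap_apply_def, natX]
    grind
  · simp [natX, *]
  · simp [natX, *]
  · omega

lemma natX_hexagon {G : Type*} [CommGroup G] {m a b c : ℕ} (q : G) (x : ℕ → G)
    (ha : a < m) (hb : b < m) (hc : c < m) {i : ℕ} (hi : i < m + 3) :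
    natX (m + 2) q (natX (m + 1) q (natX m q x a b) b c) m c i =
      natX (m + 2) q (natX (m + 1) q (natX m q x b c) a b) a m (Equiv.swap m (m + 1) i) := by
  have ha1 : a < m + 1 := by omega
  have hb1 : b < m + 1 := by omega
  have hc1 : c < m + 1 := by omega
  rcases lt_cases hi with h | rfl | rfl | rfl
  · simp only [Equiv.swap_apply_def, natX]
    grind
  · simp [natX, *]
  · simp [natX, *]
  · have e : Equiv.swap m (m + 1) (m + 2) = m + 2 :=
      Equiv.swap_apply_of_ne_of_ne (by omega) (by omega)
    simp only [e, natX, ha, hb, hc, ha1, hc1, lt_irrefl, if_true, if_false,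
      show m < m + 1 by omega]
    -- both sides are `q⁻² x_a x_b x_c`
    simp only [mul_assoc, mul_left_comm]

/-! ### Commuting unlinkings and the hexagon -/

lemma QP.Cn_symm {G : Type u} {Q : QP G} (hs : ∀ a b, Q.C a b = Q.C b a) (a b : ℕ) :
    Q.Cn a b = Q.Cn b a := by
  simp only [QP.Cn]
  grind

/-- Unlinkings of disjoint pairs of nodes commute up to exchanging the two new nodes. -/
lemma permEquivRel_disjoint {G : Type u} [CommGroup G] (q : G) {a b c d : ℕ} (Q : QP G)
    (hs : ∀ i j, Q.C i j = Q.C j i)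
    (ha : a < Q.m) (hb : b < Q.m) (hc : c < Q.m) (hd : d < Q.m) (hab : a ≠ b) (hcd : c ≠ d)
    (hac : a ≠ c) (had : a ≠ d) (hbc : b ≠ c) (hbd : b ≠ d) :
    PermEquivRel Q.m (unlinkStep q c d (unlinkStep q a b Q))
      (unlinkStep q a b (unlinkStep q c d Q)) := by
  have m1 := unlinkStep_m q Q ha hb hab
  have m2 := unlinkStep_m q Q hc hd hcd
  have c1 : c < (unlinkStep q a b Q).m := by omega
  have d1 : d < (unlinkStep q a b Q).m := by omega
  have a2 : a < (unlinkStep q c d Q).m := by omega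
  have b2 : b < (unlinkStep q c d Q).m := by omega
  have n1 := unlinkStep_m q _ c1 d1 hcd
  have n2 := unlinkStep_m q _ a2 b2 hab
  refine permEquivRel_of_swap (by omega) (by omega) ?_ ?_
  · intro i j hi hj
    rw [unlinkStep_Cn q _ c1 d1 hcd, unlinkStep_Cn q _ a2 b2 hab, unlinkStep_Cn q _ ha hb hab,
      unlinkStep_Cn q _ hc hd hcd, m1, m2]
    exact natC_disjoint (QP.Cn_symm hs) ha hb hc hd hac had hbc hbd (by omega) (by omega)
  · intro i hi
    rw [unlinkStep_xn q _ c1 d1 hcd, unlinkStep_xn q _ a2 b2 hab, unlinkStep_xn q _ ha hb hab,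
      unlinkStep_xn q _ hc hd hcd, m1, m2]
    exact natX_disjoint q _ ha hb hc hd (by omega)

/-- For unlinkings `U(a,b)` and `U(b,c)` sharing the node `b`, the order in which they are applied
affects which of the two new nodes loses an arrow. Unlinking the node for `ab` from `c` in the one
case, and `a` from the node for `bc` in the other, restores the agreement. -/
lemma permEquivRel_hexagon {G : Type u} [CommGroup G] (q : G) {a b c : ℕ} (Q : QP G)
    (hs : ∀ i j, Q.C i j = Q.C j i)
    (ha : a < Q.m) (hb : b < Q.m) (hc : c < Q.m) (hab : a ≠ b) (hbc : b ≠ c) (hac : a ≠ c) :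
    PermEquivRel Q.m (unlinkStep q Q.m c (unlinkStep q b c (unlinkStep q a b Q)))
      (unlinkStep q a Q.m (unlinkStep q a b (unlinkStep q b c Q))) := by
  have m1 := unlinkStep_m q Q ha hb hab
  have m2 := unlinkStep_m q Q hb hc hbc
  have b1 : b < (unlinkStep q a b Q).m := by omega
  have c1 : c < (unlinkStep q a b Q).m := by omega
  have a2 : a < (unlinkStep q b c Q).m := by omega
  have b2 : b < (unlinkStep q b c Q).m := by omega
  have n1 := unlinkStep_m q _ b1 c1 hbc
  have n2 := unlinkStep_m q _ a2 b2 hab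
  rw [m1] at n1
  rw [m2] at n2
  have p3 : Q.m < (unlinkStep q b c (unlinkStep q a b Q)).m := by omega
  have c3 : c < (unlinkStep q b c (unlinkStep q a b Q)).m := by omega
  have a4 : a < (unlinkStep q a b (unlinkStep q b c Q)).m := by omega
  have p4 : Q.m < (unlinkStep q a b (unlinkStep q b c Q)).m := by omega
  have h3 : Q.m ≠ c := by omega
  have h4 : a ≠ Q.m := by omega
  have k1 := unlinkStep_m q _ p3 c3 h3
  have k2 := unlinkStep_m q _ a4 p4 h4
  refine permEquivRel_of_swap (by omega) (by omega) ?_ ?_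
  · intro i j hi hj
    rw [unlinkStep_Cn q _ p3 c3 h3, unlinkStep_Cn q _ a4 p4 h4, unlinkStep_Cn q _ b1 c1 hbc,
      unlinkStep_Cn q _ a2 b2 hab, unlinkStep_Cn q _ ha hb hab, unlinkStep_Cn q _ hb hc hbc,
      n1, n2, m1, m2]
    exact natC_hexagon (QP.Cn_symm hs) ha hb hc hab hbc hac (by omega) (by omega)
  · intro i hi
    rw [unlinkStep_xn q _ p3 c3 h3, unlinkStep_xn q _ a4 p4 h4, unlinkStep_xn q _ b1 c1 hbc,
      unlinkStep_xn q _ a2 b2 hab, unlinkStep_xn q _ ha hb hab, unlinkStep_xn q _ hb hc hbc,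
      n1, n2, m1, m2]
    exact natX_hexagon q _ ha hb hc (by omega)

lemma validSeq_one {m i j : ℕ} (h : i ≠ j) (hi : i < m) (hj : j < m) :
    ValidSeq m [(i, j)] := by
  intro t
  fin_cases t
  exact ⟨h, hi, hj⟩

lemma validSeq_two {m i j k l : ℕ} (h : i ≠ j) (hi : i < m) (hj : j < m)
    (h' : k ≠ l) (hk : k < m + 1) (hl : l < m + 1) : ValidSeq m [(i, j), (k, l)] := by
  intro t
  fin_cases t
  · exact ⟨h, hi, hj⟩
  · exact ⟨h', hk, hl⟩

/-! ### Existence of connectors -/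

/-- **Existence of (1,1)-connectors** (Lemma 3.1 of Section 3.4).
For any two unlinkings `U(a,b)` and `U(c,d)` of nodes of a quiver pair with `m` nodes, there
are sequences of unlinkings `T₁`, `T₂` starting at `m+1` nodes, of equal length at most `2`,
such that on every quiver pair `(C,x)` with `m` nodes over every commutative group, applying
`U(a,b)` then `T₁` and applying `U(c,d)` then `T₂` give quiver pairs that are
permutation-equivalent rel the first `m` nodes. -/
theorem connector_one_one (m : ℕ) (a b c d : ℕ)
    (ha : a < m) (hb : b < m) (hc : c < m) (hd : d < m) (hab : a ≠ b) (hcd : c ≠ d) :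
    ∃ T₁ T₂ : List (ℕ × ℕ),
      ValidSeq (m + 1) T₁ ∧ ValidSeq (m + 1) T₂ ∧
      T₁.length = T₂.length ∧ T₁.length ≤ 2 ∧
      ∀ (G : Type u) [CommGroup G] (q : G) (C : Fin m → Fin m → ℤ),
        (∀ i j, C i j = C j i) → ∀ x : Fin m → G,
        PermEquivRel m (applySeq q T₁ (unlinkStep q a b ⟨m, C, x⟩))
          (applySeq q T₂ (unlinkStep q c d ⟨m, C, x⟩)) := by
  by_cases hac : a = c
  · subst hac
    by_cases hbd : b = d
    · subst hbd
      exact ⟨[], [], fun t => t.elim0, fun t => t.elim0, rfl, by simp,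
        fun G _ q C _ x => PermEquivRel.refl _ _⟩
    · refine ⟨[(a, d), (m, d)], [(b, a), (b, m)],
        validSeq_two (by omega) (by omega) (by omega) (by omega) (by omega) (by omega),
        validSeq_two (by omega) (by omega) (by omega) (by omega) (by omega) (by omega),
        rfl, le_rfl, fun G _ q C hs x => ?_⟩
      rw [unlinkStep_comm q ⟨m, C, x⟩ hs a b]
      exact permEquivRel_hexagon q ⟨m, C, x⟩ hs hb ha hd (by omega) (by omega) (by omega)
  by_cases had : a = d
  · subst had
    by_cases hbc : b = c
    · subst hbc
      refine ⟨[], [], fun t => t.elim0, fun t => t.elim0, rfl, by simp,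
        fun G _ q C hs x => ?_⟩
      rw [unlinkStep_comm q ⟨m, C, x⟩ hs a b]
      exact PermEquivRel.refl _ _
    · refine ⟨[(a, c), (m, c)], [(b, a), (b, m)],
        validSeq_two (by omega) (by omega) (by omega) (by omega) (by omega) (by omega),
        validSeq_two (by omega) (by omega) (by omega) (by omega) (by omega) (by omega),
        rfl, le_rfl, fun G _ q C hs x => ?_⟩
      rw [unlinkStep_comm q ⟨m, C, x⟩ hs a b, unlinkStep_comm q ⟨m, C, x⟩ hs c a]
      exact permEquivRel_hexagon q ⟨m, C, x⟩ hs hb ha hc (by omega) (by omega) (by omega)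
  by_cases hbc : b = c
  · subst hbc
    refine ⟨[(b, d), (m, d)], [(a, b), (a, m)],
      validSeq_two (by omega) (by omega) (by omega) (by omega) (by omega) (by omega),
      validSeq_two (by omega) (by omega) (by omega) (by omega) (by omega) (by omega),
      rfl, le_rfl, fun G _ q C hs x => ?_⟩
    exact permEquivRel_hexagon q ⟨m, C, x⟩ hs ha hb hd (by omega) (by omega) (by omega)
  by_cases hbd : b = d
  · subst hbd
    refine ⟨[(b, c), (m, c)], [(a, b), (a, m)],
      validSeq_two (by omega) (by omega) (by omega) (by omega) (by omega) (by omega),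
      validSeq_two (by omega) (by omega) (by omega) (by omega) (by omega) (by omega),
      rfl, le_rfl, fun G _ q C hs x => ?_⟩
    rw [unlinkStep_comm q ⟨m, C, x⟩ hs c b]
    exact permEquivRel_hexagon q ⟨m, C, x⟩ hs ha hb hc (by omega) (by omega) (by omega)
  · exact ⟨[(c, d)], [(a, b)], validSeq_one hcd (by omega) (by omega),
      validSeq_one hab (by omega) (by omega), rfl, by simp,
      fun G _ q C hs x => permEquivRel_disjoint q ⟨m, C, x⟩ hs ha hb hc hd hab hcd hac had hbc hbd⟩

end QuiverUnlink
end

section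
/- Sequences of unlinkings on disjoint sets of nodes commute: Let A, B ⊆ {1,…,m} be disjoint. Let S_A = ((a_1,b_1),…,(a_{n_A},b_{n_A})) be a sequence of unlinkings starting at m nodes with a_t, b_t ∈ A ∪ {m+1,…,m+t−1} for every t, and let S_B = ((c_1,d_1),…,(c_{n_B},d_{n_B})) be one with c_t, d_t ∈ B ∪ {m+1,…,m+t−1} for every t. For a sequence S and an integer r ≥ 0, let S[r] denote S with every index greater than m increased by r. Let π be the permutation of {1,…,m+n_A+n_B} fixing 1,…,m and sending m+t ↦ m+n_B+t for 1 ≤ t ≤ n_A and m+n_A+u ↦ m+u for 1 ≤ u ≤ n_B. Then for every quiver pair (C,x) with m nodes, the result X of applying S_A and then S_B[n_A] to (C,x) coincides after relabeling by π with the result Y of applying S_B and then S_A[n_B] to (C,x): X's matrix at (a,b) equals Y's matrix at (π(a),π(b)) and X's variable at a equals Y's variable at π(a), for all a,b. -/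
/-!
Unlinking is modelled on functions defined on all of `ℕ`, where a step also records the label of
the node it creates. In this model a step `(i, j, p)` and a step `(k, l, r)` whose label sets
`{i, j, p}` and `{k, l, r}` are disjoint commute on the nose (`nodeStep_comm`): the only entry
influenced by both is the one between `p` and `r`, and both orders give
`C k i + C k j + C l i + C l j` by symmetry of `C`. Hence two sequences of steps with disjoint labels
commute (`run_comm`).

The quiver pairs of the theorem agree with this model because their entries are read with junk
values `0` and `1` out of range, which is compatible with the recursion (`applySeq_toNodeData`).
The model is natural under injective relabelling (`run_relabel`), and the permutation `π` turns the
labels used along `S_A, S_B[n_A]` into those used along `S_B, S_A[n_B]`; it fixes the initial data,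
which are junk from `m` on.
-/

namespace QuiverUnlink

universe u

/-- `S[r]`: the sequence `S` with every created-node index (index `≥ m`, i.e. greater than the
`m`-th node in 1-based labels) increased by `r`. -/
def shiftSeq (m r : ℕ) (S : List (ℕ × ℕ)) : List (ℕ × ℕ) :=
  S.map fun e =>
    ((if e.1 < m then e.1 else e.1 + r), (if e.2 < m then e.2 else e.2 + r))

/-! ### Unlinking on matrices with node set `ℕ` -/

/-- Column of the node created by unlinking `i` and `j`, at an old node `c`. -/
def newCol (C : ℕ → ℕ → ℤ) (i j c : ℕ) : ℤ :=
  if c = i then C i i + C i j - 1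
  else if c = j then C j j + C i j - 1
  else C c i + C c j

/-- Matrix part of unlinking `i` and `j` on matrices indexed by all of `ℕ`; the new node is
given the label `p`. -/
def nodeC (C : ℕ → ℕ → ℤ) (i j p : ℕ) : ℕ → ℕ → ℤ := fun a b =>
  if a = p then
    if b = p then C i i + C j j + 2 * C i j - 1 else newCol C i j b
  else if b = p then newCol C i j a
  else if (a = i ∧ b = j) ∨ (a = j ∧ b = i) then C i j - 1
  else C a b

/-- A matrix and generating parameters indexed by all of `ℕ`. -/
abbrev NodeData (G : Type u) := (ℕ → ℕ → ℤ) × (ℕ → G)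

/-- Unlinking on `NodeData`: the step `((i, j), p)` unlinks `i` and `j` and labels the created
node `p`. -/
def nodeStep {G : Type u} [CommGroup G] (q : G) (σ : NodeData G) (e : (ℕ × ℕ) × ℕ) :
    NodeData G :=
  (nodeC σ.1 e.1.1 e.1.2 e.2,
    fun a => if a = e.2 then q⁻¹ * σ.2 e.1.1 * σ.2 e.1.2 else σ.2 a)

/-- The `NodeData` of a quiver pair, with junk values `0` and `1` out of range. -/
def QP.toNodeData {G : Type u} [CommGroup G] (Q : QP G) : NodeData G := (Q.Cn, Q.xn)

/-- Pulling `NodeData` back along a map of labels. -/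
def NodeData.comap {G : Type u} (σ : NodeData G) (f : ℕ → ℕ) : NodeData G :=
  (fun a b => σ.1 (f a) (f b), fun a => σ.2 (f a))

/-- Relabelling a step. -/
def mapStep (f : ℕ → ℕ) (e : (ℕ × ℕ) × ℕ) : (ℕ × ℕ) × ℕ := ((f e.1.1, f e.1.2), f e.2)

/-- The labels occurring in two steps are disjoint. -/
def DisjointSteps (e f : (ℕ × ℕ) × ℕ) : Prop :=
  e.1.1 ≠ f.1.1 ∧ e.1.1 ≠ f.1.2 ∧ e.1.1 ≠ f.2 ∧
  e.1.2 ≠ f.1.1 ∧ e.1.2 ≠ f.1.2 ∧ e.1.2 ≠ f.2 ∧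
  e.2 ≠ f.1.1 ∧ e.2 ≠ f.1.2 ∧ e.2 ≠ f.2

/-! ### Commutation and relabelling -/

theorem nodeC_symm {C : ℕ → ℕ → ℤ} (hC : ∀ a b, C a b = C b a) (i j p a b : ℕ) :
    nodeC C i j p a b = nodeC C i j p b a := by
  unfold nodeC
  grind

theorem nodeC_comm {C : ℕ → ℕ → ℤ} (hC : ∀ a b, C a b = C b a) {i j p k l r : ℕ}
    (h : DisjointSteps ((i, j), p) ((k, l), r)) (a b : ℕ) :
    nodeC (nodeC C i j p) k l r a b = nodeC (nodeC C k l r) i j p a b := by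
  obtain ⟨h1, h2, h3, h4, h5, h6, h7, h8, h9⟩ := h
  simp only at h1 h2 h3 h4 h5 h6 h7 h8 h9
  by_cases ap : a = p <;> by_cases ar : a = r <;> by_cases bp : b = p <;> by_cases br : b = r <;>
    simp only [nodeC, newCol] <;> grind

/-- Steps with disjoint labels commute. -/
theorem nodeStep_comm {G : Type u} [CommGroup G] (q : G) {σ : NodeData G}
    (hC : ∀ a b, σ.1 a b = σ.1 b a) {e f : (ℕ × ℕ) × ℕ} (h : DisjointSteps e f) :
    nodeStep q (nodeStep q σ e) f = nodeStep q (nodeStep q σ f) e := by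
  refine Prod.ext ?_ ?_
  · funext a b
    exact nodeC_comm hC h a b
  · funext a
    obtain ⟨h1, h2, h3, h4, h5, h6, h7, h8, h9⟩ := h
    simp only [nodeStep]
    grind

theorem run_symm {G : Type u} [CommGroup G] (q : G) (L : List ((ℕ × ℕ) × ℕ)) {σ : NodeData G}
    (hC : ∀ a b, σ.1 a b = σ.1 b a) (a b : ℕ) :
    (L.foldl (nodeStep q) σ).1 a b = (L.foldl (nodeStep q) σ).1 b a := by
  induction L generalizing σ with
  | nil => exact hC a b
  | cons e L ih => exact ih (nodeC_symm hC _ _ _)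

theorem run_comm_step {G : Type u} [CommGroup G] (q : G) (L : List ((ℕ × ℕ) × ℕ))
    (f : (ℕ × ℕ) × ℕ) {σ : NodeData G} (hC : ∀ a b, σ.1 a b = σ.1 b a)
    (h : ∀ e ∈ L, DisjointSteps e f) :
    nodeStep q (L.foldl (nodeStep q) σ) f = L.foldl (nodeStep q) (nodeStep q σ f) := by
  induction L generalizing σ with
  | nil => rfl
  | cons e L ih =>
    simp only [List.forall_mem_cons] at h
    rw [List.foldl_cons, List.foldl_cons, ih (nodeC_symm hC _ _ _) h.2,
      nodeStep_comm q hC h.1]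

/-- Sequences of steps with disjoint labels commute. -/
theorem run_comm {G : Type u} [CommGroup G] (q : G) (L M : List ((ℕ × ℕ) × ℕ))
    {σ : NodeData G} (hC : ∀ a b, σ.1 a b = σ.1 b a)
    (h : ∀ e ∈ L, ∀ f ∈ M, DisjointSteps e f) :
    M.foldl (nodeStep q) (L.foldl (nodeStep q) σ) =
      L.foldl (nodeStep q) (M.foldl (nodeStep q) σ) := by
  induction M generalizing σ with
  | nil => rfl
  | cons f M ih =>
    simp only [List.forall_mem_cons] at h
    rw [List.foldl_cons, List.foldl_cons, run_comm_step q L f hC (fun e he => (h e he).1),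
      ih (nodeC_symm hC _ _ _) (fun e he => (h e he).2)]

/-- The model is natural under injective relabelling. -/
theorem run_relabel {G : Type u} [CommGroup G] (q : G) {f : ℕ → ℕ} (hf : f.Injective)
    (L : List ((ℕ × ℕ) × ℕ)) (σ : NodeData G) :
    ((L.map (mapStep f)).foldl (nodeStep q) σ).comap f = L.foldl (nodeStep q) (σ.comap f) := by
  induction L generalizing σ with
  | nil => rfl
  | cons e L ih =>
    rw [List.map_cons, List.foldl_cons, List.foldl_cons, ih]
    congr 1
    refine Prod.ext ?_ ?_
    · funext a b
      simp only [nodeStep, NodeData.comap, mapStep, nodeC, newCol, hf.eq_iff]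
    · funext a
      simp only [nodeStep, NodeData.comap, mapStep, hf.eq_iff]

/-! ### Comparison with quiver pairs -/

/-- A valid unlinking of a quiver pair agrees with the model, also at junk indices. -/
theorem unlinkStep_toNodeData {G : Type u} [CommGroup G] (q : G) {i j : ℕ} {Q : QP G}
    (h : i < Q.m ∧ j < Q.m ∧ i ≠ j) :
    (unlinkStep q i j Q).toNodeData = nodeStep q Q.toNodeData ((i, j), Q.m) := by
  rw [unlinkStep, dif_pos h]
  obtain ⟨hi, hj, hij⟩ := h
  refine Prod.ext ?_ ?_
  · funext a b
    simp only [QP.toNodeData, nodeStep, QP.Cn, nodeC, newCol, unlinkC, Fin.mk.injEq]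
    -- An index is an old node, the new node, or out of range.
    have key : ∀ c, (c < Q.m ∧ c < Q.m + 1 ∧ c ≠ Q.m) ∨ (c = Q.m ∧ ¬c < Q.m ∧ c < Q.m + 1) ∨
        (¬c < Q.m + 1 ∧ ¬c < Q.m ∧ c ≠ Q.m ∧ c ≠ i ∧ c ≠ j) := by omega
    rcases key a with ha | ha | ha <;> rcases key b with hb | hb | hb <;>
      simp only [ha, hb, hi, hj, hi.ne', hj.ne', lt_irrefl, Nat.lt_succ_self, dite_true,
        dite_false, if_true, if_false, false_and, and_false, or_self, add_zero]
  · funext a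
    simp only [QP.toNodeData, nodeStep, QP.xn, unlinkX]
    rcases lt_trichotomy a Q.m with ha | ha | ha <;> grind

/-- A valid sequence of unlinkings agrees with the model, the created nodes being labelled
consecutively from `n`. -/
theorem applySeq_toNodeData {G : Type u} [CommGroup G] (q : G) (S : List (ℕ × ℕ)) {n : ℕ}
    {Q : QP G} (hn : Q.m = n) (hS : ValidSeq n S) :
    (applySeq q S Q).m = n + S.length ∧
      (applySeq q S Q).toNodeData = (S.zipIdx n).foldl (nodeStep q) Q.toNodeData := by
  induction S generalizing n Q with
  | nil => exact ⟨hn, rfl⟩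
  | cons e S ih =>
    obtain ⟨h0, h1, h2⟩ := hS ⟨0, by simp⟩
    have h : e.1 < Q.m ∧ e.2 < Q.m ∧ e.1 ≠ e.2 := ⟨hn ▸ h1, hn ▸ h2, h0⟩
    have hm : (unlinkStep q e.1 e.2 Q).m = n + 1 := by
      rw [unlinkStep, dif_pos h, ← hn]
    have hS' : ValidSeq (n + 1) S := fun t => by
      have := hS t.succ
      simpa [add_assoc, add_comm 1] using this
    obtain ⟨hl, hd⟩ := ih hm hS'
    refine ⟨hl.trans (by rw [List.length_cons]; omega), hd.trans ?_⟩
    rw [unlinkStep_toNodeData q h, hn, List.zipIdx_cons, List.foldl_cons]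

/-- A sequence supported on a set of initial nodes and on its own created nodes is valid, and
remains so when it is run after `r` other unlinkings with its created nodes shifted by `r`. -/
theorem validSeq_shiftSeq {m : ℕ} {A : Set ℕ} (hAm : ∀ a ∈ A, a < m) {S : List (ℕ × ℕ)}
    (hS : ∀ t : Fin S.length,
      (S.get t).1 ≠ (S.get t).2 ∧
      ((S.get t).1 ∈ A ∨ (m ≤ (S.get t).1 ∧ (S.get t).1 < m + (t : ℕ))) ∧
      ((S.get t).2 ∈ A ∨ (m ≤ (S.get t).2 ∧ (S.get t).2 < m + (t : ℕ)))) (r : ℕ) :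
    ValidSeq m S ∧ ValidSeq (m + r) (shiftSeq m r S) := by
  constructor
  · intro t
    have := hS t
    have h1 := hAm (S.get t).1
    have h2 := hAm (S.get t).2
    grind
  · rintro ⟨t, ht⟩
    have ht' : t < S.length := by simpa [shiftSeq] using ht
    have := hS ⟨t, ht'⟩
    have h1 := hAm S[t].1
    have h2 := hAm S[t].2
    simp only [List.get_eq_getElem] at this
    simp only [shiftSeq, List.get_eq_getElem, List.getElem_map]
    grind

/-- **Sequences of unlinkings on disjoint sets of nodes commute.**
Let `A, B ⊆ {0,…,m-1}` be disjoint, let `S_A` be a sequence of unlinkings starting at `m`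
nodes whose entries at position `t` lie in `A` or among the previously created nodes, and
likewise `S_B` with `B`. Let `π` be the permutation of `{0,…,m+n_A+n_B-1}` fixing the first
`m` indices, sending `m+t ↦ m+n_B+t` for `t < n_A` and `m+n_A+u ↦ m+u` for `u < n_B`. Then
for every quiver pair `(C,x)` with `m` nodes, applying `S_A` then `S_B[n_A]` coincides after
relabeling by `π` with applying `S_B` then `S_A[n_B]`. -/
theorem disjoint_unlinkings_commute {G : Type u} [CommGroup G] (q : G) (m : ℕ)
    (A B : Set ℕ) (hAm : ∀ a ∈ A, a < m) (hBm : ∀ b ∈ B, b < m) (hAB : Disjoint A B)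
    (SA SB : List (ℕ × ℕ))
    (hSA : ∀ t : Fin SA.length,
      (SA.get t).1 ≠ (SA.get t).2 ∧
      ((SA.get t).1 ∈ A ∨ (m ≤ (SA.get t).1 ∧ (SA.get t).1 < m + (t : ℕ))) ∧
      ((SA.get t).2 ∈ A ∨ (m ≤ (SA.get t).2 ∧ (SA.get t).2 < m + (t : ℕ))))
    (hSB : ∀ t : Fin SB.length,
      (SB.get t).1 ≠ (SB.get t).2 ∧
      ((SB.get t).1 ∈ B ∨ (m ≤ (SB.get t).1 ∧ (SB.get t).1 < m + (t : ℕ))) ∧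
      ((SB.get t).2 ∈ B ∨ (m ≤ (SB.get t).2 ∧ (SB.get t).2 < m + (t : ℕ))))
    (C : Fin m → Fin m → ℤ) (hC : ∀ a b, C a b = C b a) (x : Fin m → G) :
    let nA := SA.length
    let nB := SB.length
    let X := applySeq q (shiftSeq m nA SB) (applySeq q SA ⟨m, C, x⟩)
    let Y := applySeq q (shiftSeq m nB SA) (applySeq q SB ⟨m, C, x⟩)
    let πn : ℕ → ℕ := fun a =>
      if a < m then a
      else if a < m + nA then a + nB
      else if a < m + nA + nB then a - nA
      else a
    X.m = m + nA + nB ∧ Y.m = m + nA + nB ∧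
    (∀ a b, a < m + nA + nB → b < m + nA + nB → X.Cn a b = Y.Cn (πn a) (πn b)) ∧
    (∀ a, a < m + nA + nB → X.xn a = Y.xn (πn a)) := by
  intro nA nB X Y πn
  have hA : ∀ t (ht : t < SA.length), SA[t].1 ≠ SA[t].2 ∧
      (SA[t].1 ∈ A ∨ (m ≤ SA[t].1 ∧ SA[t].1 < m + t)) ∧
      (SA[t].2 ∈ A ∨ (m ≤ SA[t].2 ∧ SA[t].2 < m + t)) := fun t ht => hSA ⟨t, ht⟩
  have hB : ∀ t (ht : t < SB.length), SB[t].1 ≠ SB[t].2 ∧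
      (SB[t].1 ∈ B ∨ (m ≤ SB[t].1 ∧ SB[t].1 < m + t)) ∧
      (SB[t].2 ∈ B ∨ (m ≤ SB[t].2 ∧ SB[t].2 < m + t)) := fun t ht => hSB ⟨t, ht⟩
  have hne : ∀ a ∈ A, ∀ b ∈ B, a ≠ b := fun a ha b hb => hAB.ne_of_mem ha hb
  obtain ⟨hvA, hvA'⟩ := validSeq_shiftSeq hAm hSA nB
  obtain ⟨hvB, hvB'⟩ := validSeq_shiftSeq hBm hSB nA
  obtain ⟨hA1, hA2⟩ := applySeq_toNodeData q SA (Q := ⟨m, C, x⟩) rfl hvA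
  obtain ⟨hB1, hB2⟩ := applySeq_toNodeData q SB (Q := ⟨m, C, x⟩) rfl hvB
  obtain ⟨hX1, hX2⟩ := applySeq_toNodeData q (shiftSeq m nA SB) hA1 hvB'
  obtain ⟨hY1, hY2⟩ := applySeq_toNodeData q (shiftSeq m nB SA) hB1 hvA'
  have hlen : ∀ r (S : List (ℕ × ℕ)), (shiftSeq m r S).length = S.length := fun r S => by
    simp [shiftSeq]
  -- `πn` is a bijection of all of `ℕ`, so injectivity holds without range restrictions.
  have hπ : πn.Injective := by
    intro a b hab
    simp only [πn] at hab
    grind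
  set σ : NodeData G := QP.toNodeData ⟨m, C, x⟩ with hσ
  have hσs : ∀ a b, σ.1 a b = σ.1 b a := by
    intro a b
    simp only [hσ, QP.toNodeData, QP.Cn]
    grind
  -- `πn` fixes the labels below `m` and preserves `[m, ∞)`, where `σ` takes its junk values.
  have hσπ : σ.comap πn = σ := by
    refine Prod.ext ?_ ?_
    · funext a b
      simp only [hσ, QP.toNodeData, QP.Cn, NodeData.comap, πn]
      grind
    · funext a
      simp only [hσ, QP.toNodeData, QP.xn, NodeData.comap, πn]
      grind
  -- `πn` sends the labels used in computing `X` to those used in computing `Y`.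
  have hmapA : (SA.zipIdx m).map (mapStep πn) = (shiftSeq m nB SA).zipIdx (m + SB.length) := by
    refine List.ext_getElem (by simp [hlen]) fun t h1 h2 => ?_
    have ht : t < SA.length := by simpa using h1
    have := hA t ht
    have hm1 := hAm SA[t].1
    have hm2 := hAm SA[t].2
    simp only [List.getElem_map, List.getElem_zipIdx, mapStep, shiftSeq, πn, Prod.mk.injEq]
    grind
  have hmapB : ((shiftSeq m nA SB).zipIdx (m + SA.length)).map (mapStep πn) = SB.zipIdx m := by
    refine List.ext_getElem (by simp [hlen]) fun t h1 h2 => ?_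
    have ht : t < SB.length := by simpa using h2
    have := hB t ht
    have hm1 := hBm SB[t].1
    have hm2 := hBm SB[t].2
    simp only [List.getElem_map, List.getElem_zipIdx, mapStep, shiftSeq, πn, Prod.ext_iff]
    grind
  have hXY : X.toNodeData = Y.toNodeData.comap πn := by
    simp only [X, Y]
    rw [hX2, hA2, hY2, hB2, ← hmapA, ← hmapB, run_relabel q hπ, run_relabel q hπ, hσπ]
    -- Both sides start from `σ` and use the labels of the order `S_A`, `S_B[n_A]`.
    refine run_comm q _ _ hσs ?_
    intro e he f hf
    obtain ⟨t, ht, rfl⟩ := List.getElem_of_mem he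
    obtain ⟨u, hu, rfl⟩ := List.getElem_of_mem hf
    simp only [List.length_zipIdx, hlen] at ht hu
    have h1 := hA t ht
    have h2 := hB u hu
    have hm1 := hAm SA[t].1
    have hm2 := hAm SA[t].2
    have hm3 := hBm SB[u].1
    have hm4 := hBm SB[u].2
    have hn1 := hne SA[t].1
    have hn2 := hne SA[t].2
    simp only [List.getElem_zipIdx, DisjointSteps, shiftSeq, List.getElem_map]
    grind
  refine ⟨hX1.trans (by rw [hlen]),
    hY1.trans (by rw [hlen]; exact Nat.add_right_comm _ _ _), ?_, ?_⟩
  · intro a b _ _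
    exact congrFun (congrFun (congrArg Prod.fst hXY) a) b
  · intro a _
    exact congrFun (congrArg Prod.snd hXY) a

end QuiverUnlink
end
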